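/- In U/I_RKst, the noncommutative homogeneous symmetric functions h_d(u) lie in the subalgebra generated by e_1(u), e_2(u), ..., and pairwise commute; specifically h_d(u) = det(e_{1+j−i}(u))_{1≤i,j≤d} computed via the Jacobi-Trudi expansion (i.e., h_d(u) is the image of h_d(x) under the homomorphism Λ(x) → U/I_RKst sending e_k(x) to e_k(u)). -/

import Mathlib

open scoped Classical

noncomputable section

/-- The monomial (word) in the free associative algebra `U = ℤ⟨u_1, …, u_N⟩`. -/
def word (N : ℕ) (l : List (Fin N)) : FreeAlgebra ℤ (Fin N) :=
  (l.map (FreeAlgebra.ι ℤ)).prod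

/-- The generating relations of the two-sided ideal `I_RKst`. -/
inductive RKRel (N : ℕ) : FreeAlgebra ℤ (Fin N) → FreeAlgebra ℤ (Fin N) → Prop
  | knuth_rotation (a b c : Fin N) (hab : a < b) (hbc : b < c) :
      RKRel N
        (FreeAlgebra.ι ℤ b *
            (FreeAlgebra.ι ℤ a * FreeAlgebra.ι ℤ c - FreeAlgebra.ι ℤ c * FreeAlgebra.ι ℤ a) -
          (FreeAlgebra.ι ℤ a * FreeAlgebra.ι ℤ c - FreeAlgebra.ι ℤ c * FreeAlgebra.ι ℤ a) *
            FreeAlgebra.ι ℤ b)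
        0
  | repeated (l : List (Fin N)) (h : ¬ l.Nodup) : RKRel N (word N l) 0

/-- The noncommutative elementary symmetric function `e_d(u)`. -/
def esym (N d : ℕ) : FreeAlgebra ℤ (Fin N) :=
  ∑ f : Fin d → Fin N, if StrictAnti f then word N (List.ofFn f) else 0

/-- `e_d(u)` with integer index: `e_d(u) = 0` for `d < 0`. -/
def esymZ (N : ℕ) (d : ℤ) : FreeAlgebra ℤ (Fin N) :=
  if 0 ≤ d then esym N d.toNat else 0

/-- The noncommutative homogeneous symmetric function `h_d(u)`. -/
def hsym (N d : ℕ) : FreeAlgebra ℤ (Fin N) :=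
  ∑ f : Fin d → Fin N, if Monotone f then word N (List.ofFn f) else 0

/-- The canonical projection `U → U/I_RKst`. -/
def pr (N : ℕ) : FreeAlgebra ℤ (Fin N) →ₐ[ℤ] RingQuot (RKRel N) :=
  RingQuot.mkAlgHom ℤ (RKRel N)

section Aux

variable {A : Type*} [Ring A]

/-- Recursive elementary symmetric functions in the letters `u 0, …, u (n-1)`. -/
def eRec (u : ℕ → A) : ℕ → ℕ → A
  | _, 0 => 1
  | 0, _ + 1 => 0
  | n + 1, k + 1 => eRec u n (k + 1) + u n * eRec u n k

/-- Recursive homogeneous symmetric functions in the letters `u n, …, u (N-1)`. -/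
def hRec (u : ℕ → A) (N : ℕ) : ℕ → ℕ → A
  | 0, _ => 1
  | d + 1, n => ∑ a ∈ Finset.Ico n N, u a * hRec u N d a

lemma eRec_zero (u : ℕ → A) (n : ℕ) : eRec u n 0 = 1 := by cases n <;> rfl

lemma eRec_succ (u : ℕ → A) (n k : ℕ) :
    eRec u (n + 1) (k + 1) = eRec u n (k + 1) + u n * eRec u n k := rfl

lemma eRec_eq_sum (u : ℕ → A) (n k : ℕ) :
    eRec u n (k + 1) = ∑ a ∈ Finset.range n, u a * eRec u a k := by
  induction n with
  | zero => simp [eRec]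
  | succ n ih => rw [Finset.sum_range_succ, ← ih, eRec_succ]

lemma hRec_succ (u : ℕ → A) (N d n : ℕ) (h : n < N) :
    hRec u N (d + 1) n = u n * hRec u N d n + hRec u N (d + 1) (n + 1) := by
  simp only [hRec]
  rw [Finset.sum_eq_sum_Ico_succ_bot h]

lemma eh_rec (u : ℕ → A) (N n : ℕ) (hn : n ≤ N) (d : ℕ) :
    ∑ p ∈ Finset.HasAntidiagonal.antidiagonal d, (-1) ^ p.1 * (eRec u n p.1 * hRec u N p.2 0) =
      hRec u N d n := by
  induction n generalizing d with
  | zero =>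
    cases d with
    | zero => simp [eRec_zero]
    | succ d =>
      rw [Finset.Nat.sum_antidiagonal_succ]
      simp [eRec]
  | succ n ih =>
    have ih' := ih (by omega)
    cases d with
    | zero => simp [eRec_zero, hRec]
    | succ d =>
      have h1 := ih' (d + 1)
      have h2 := ih' d
      rw [hRec_succ u N d n (by omega)] at h1
      rw [Finset.Nat.sum_antidiagonal_succ] at h1 ⊢
      simp only [eRec_succ]
      rw [← h2] at h1
      have key : ∀ p : ℕ × ℕ, (-1) ^ (p.1 + 1) *
          ((eRec u n (p.1 + 1) + u n * eRec u n p.1) * hRec u N p.2 0) =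
          (-1) ^ (p.1 + 1) * (eRec u n (p.1 + 1) * hRec u N p.2 0)
          - u n * ((-1) ^ p.1 * (eRec u n p.1 * hRec u N p.2 0)) := by
        intro p
        have hc : u n * (-1) ^ p.1 = (-1) ^ p.1 * u n :=
          ((Commute.neg_one_right (u n)).pow_right p.1)
        rw [← mul_assoc (u n), hc, pow_succ]
        noncomm_ring
      simp only [key, Finset.sum_sub_distrib, ← Finset.mul_sum]
      simp only [eRec_zero] at h1 ⊢
      rw [← add_sub_assoc, h1]
      abel

lemma eRec_comm_u (u : ℕ → A)
    (h1 : ∀ a b c, a < b → b < c → u b * (u a * u c - u c * u a) = (u a * u c - u c * u a) * u b)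
    (h2 : ∀ i w, u i * w * u i = 0) (n c : ℕ) (hc : n ≤ c) :
    (∀ b, n ≤ b → b < c → u b * (eRec u n 1 * u c - u c * eRec u n 1) =
      (eRec u n 1 * u c - u c * eRec u n 1) * u b) ∧
    ∀ k, eRec u n (k + 1) * u c - u c * eRec u n (k + 1) =
      (eRec u n 1 * u c - u c * eRec u n 1) * eRec u n k := by
  induction n with
  | zero => constructor <;> simp [eRec]
  | succ n ih =>
    obtain ⟨i1, i2⟩ := ih (by omega)
    have e1 : eRec u (n + 1) 1 = eRec u n 1 + u n := by simp [eRec_succ, eRec_zero]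
    constructor
    · intro b hb hbc
      have := i1 b (by omega) hbc
      have h := h1 n b c (by omega) hbc
      rw [e1]
      calc _ = u b * (eRec u n 1 * u c - u c * eRec u n 1) + u b * (u n * u c - u c * u n) := by
              noncomm_ring
        _ = _ := by rw [this, h]; noncomm_ring
    · intro k
      cases k with
      | zero => simp [eRec_zero]
      | succ k =>
        have j1 := i2 (k + 1)
        have j0 := i2 k
        have jb := i1 n le_rfl (by omega)
        have z1 := h2 n (u c)
        have z2 : u n * u n = 0 := by simpa using h2 n 1
        rw [e1, eRec_succ, eRec_succ]
        generalize eRec u n (k + 1 + 1) = x2 at *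
        generalize eRec u n (k + 1) = x1 at *
        generalize eRec u n k = x0 at *
        generalize eRec u n 1 = y at *
        calc _ = (x2 * u c - u c * x2) + (u n * u c - u c * u n) * x1
                  + u n * (x1 * u c - u c * x1) := by noncomm_ring
          _ = (y * u c - u c * y) * x1 + (u n * u c - u c * u n) * x1
                  + (u n * (y * u c - u c * y)) * x0 := by rw [j1, j0]; noncomm_ring
          _ = (y * u c - u c * y) * x1 + (u n * u c - u c * u n) * x1
                  + ((y * u c - u c * y) * u n) * x0
                  + (u n * u c * u n) * x0 - u c * (u n * u n) * x0 := by
                rw [jb, z1, z2]; simp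
          _ = _ := by noncomm_ring

lemma eRec_commute (u : ℕ → A)
    (h1 : ∀ a b c, a < b → b < c → u b * (u a * u c - u c * u a) = (u a * u c - u c * u a) * u b)
    (h2 : ∀ i w, u i * w * u i = 0) (n : ℕ) (k l : ℕ) :
    eRec u n k * eRec u n l = eRec u n l * eRec u n k := by
  induction n generalizing k l with
  | zero => cases k <;> cases l <;> simp [eRec]
  | succ n ih =>
    cases k with
    | zero => simp [eRec_zero]
    | succ k =>
    cases l with
    | zero => simp [eRec_zero]
    | succ l =>
    have key : ∀ k l, eRec u (n + 1) (k + 1) * eRec u (n + 1) (l + 1) =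
        eRec u n (k + 1) * eRec u n (l + 1) + u n * (eRec u n k * eRec u n (l + 1))
        + u n * (eRec u n (k + 1) * eRec u n l)
        + (eRec u n 1 * u n - u n * eRec u n 1) * (eRec u n k * eRec u n l) := by
      intro k l
      have h := (eRec_comm_u u h1 h2 n n le_rfl).2 k
      have z := h2 n (eRec u n k)
      rw [eRec_succ, eRec_succ, ← mul_assoc (_ - _), ← h]
      calc _ = eRec u n (k + 1) * eRec u n (l + 1) + u n * (eRec u n k * eRec u n (l + 1))
            + eRec u n (k + 1) * u n * eRec u n l + (u n * eRec u n k * u n) * eRec u n l := by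
              noncomm_ring
        _ = _ := by rw [z]; noncomm_ring
    rw [key, key, ih (k + 1) (l + 1), ih k (l + 1), ih (k + 1) l, ih k l]
    abel

/-- Jacobi–Trudi in a commutative ring, from the convolution identity. -/
lemma det_of_conv {S : Type*} [CommRing S] (e h : ℕ → S) (e0 : e 0 = 1) (h0 : h 0 = 1)
    (hc : ∀ d, ∑ p ∈ Finset.HasAntidiagonal.antidiagonal (d + 1), (-1) ^ p.1 * (e p.1 * h p.2) = 0) (d : ℕ) :
    h d = Matrix.det (Matrix.of fun i j : Fin d =>
      if (i : ℕ) ≤ j + 1 then e (j + 1 - i) else 0) := by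
  let T : Matrix (Fin (d + 1)) (Fin (d + 1)) S :=
    Matrix.of fun i j => if (i : ℕ) ≤ j then e (j - i) else 0
  let w : Fin (d + 1) → S := fun k => (-1) ^ (d - (k : ℕ)) * h (d - k)
  have hT : T.det = 1 := by
    rw [Matrix.det_of_isUpperTriangular]
    · simp [T, e0]
    · intro i j hij
      have : (j : ℕ) < i := hij
      exact if_neg (by omega)
  have hTw : T.mulVec w = Pi.single (Fin.last d) 1 := by
    ext i
    have e1 : T.mulVec w i = ∑ k ∈ Finset.range (d + 1),
        (if (i : ℕ) ≤ k then e (k - i) else 0) * ((-1) ^ (d - k) * h (d - k)) := by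
      rw [← Fin.sum_univ_eq_sum_range (fun k => (if (i : ℕ) ≤ k then e (k - i) else 0) *
        ((-1) ^ (d - k) * h (d - k)))]
      rfl
    obtain ⟨m, hm⟩ : ∃ m, d = i + m := ⟨d - i, by omega⟩
    have e2 : T.mulVec w i = (-1) ^ m *
        ∑ p ∈ Finset.HasAntidiagonal.antidiagonal m, (-1) ^ p.1 * (e p.1 * h p.2) := by
      rw [e1, Finset.Nat.sum_antidiagonal_eq_sum_range_succ_mk, Finset.mul_sum]
      have : Finset.range (d + 1) = Finset.range (i + (m + 1)) := by congr 1; omega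
      rw [this, Finset.sum_range_add, Finset.sum_eq_zero, zero_add]
      · apply Finset.sum_congr rfl
        intro k hk
        have hk' : k ≤ m := by simpa [Nat.lt_succ_iff] using hk
        have a1 : d - (i + k) = m - k := by omega
        have a2 : (-1 : S) ^ m = (-1) ^ (m - k) * (-1) ^ k := by
          rw [← pow_add]; congr 1; omega
        have a3 : (-1 : S) ^ k * (-1) ^ k = 1 := by
          rw [← mul_pow]; simp
        simp only [a1, le_add_iff_nonneg_right, zero_le, if_true, add_tsub_cancel_left]
        rw [a2]
        linear_combination (-(-1 : S) ^ (m - k) * e k * h (m - k)) * a3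
      · intro k hk
        have : ¬ (i : ℕ) ≤ k := by simpa using hk
        simp [this]
    rw [e2]
    cases m with
    | zero =>
      have : i = Fin.last d := by ext; simp; omega
      subst this
      simp [e0, h0]
    | succ m =>
      have : i ≠ Fin.last d := by rintro rfl; simp at hm
      rw [hc m]; simp [this]
  have h3 : w = T.adjugate.mulVec (Pi.single (Fin.last d) 1) := by
    rw [← hTw, Matrix.mulVec_mulVec, Matrix.adjugate_mul, hT]; simp
  have h4 := congrFun h3 0
  rw [Matrix.mulVec_single_one, Matrix.col_apply,
    Matrix.adjugate_fin_succ_eq_det_submatrix] at h4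
  have h5 : (-1 : S) ^ d * h d = (-1) ^ d * (T.submatrix (Fin.last d).succAbove
      (Fin.succAbove 0)).det := by simpa [w] using h4
  have h6 : (-1 : S) ^ d * (-1) ^ d = 1 := by rw [← mul_pow]; simp
  have h7 : h d = (T.submatrix (Fin.last d).succAbove (Fin.succAbove 0)).det := by
    have := congrArg (fun x => (-1 : S) ^ d * x) h5
    simpa only [← mul_assoc, h6, one_mul] using this
  rw [h7]
  congr 1
  ext i j
  simp only [T, Matrix.submatrix_apply, Matrix.of_apply, Fin.succAbove_last, Fin.succAbove_zero,
    Fin.val_castSucc, Fin.val_succ]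

end Aux

/-- The letters in the quotient, extended by zero. -/
def uq (N : ℕ) (i : ℕ) : RingQuot (RKRel N) :=
  if h : i < N then pr N (FreeAlgebra.ι ℤ ⟨i, h⟩) else 0

lemma uq_fin (N : ℕ) (a : Fin N) : uq N a = pr N (FreeAlgebra.ι ℤ a) := by
  simp [uq]

lemma pr_rel (N : ℕ) {x y : FreeAlgebra ℤ (Fin N)} (h : RKRel N x y) : pr N x = pr N y :=
  RingQuot.mkAlgHom_rel ℤ h

lemma uq_knuth (N : ℕ) (a b c : ℕ) (hab : a < b) (hbc : b < c) :
    uq N b * (uq N a * uq N c - uq N c * uq N a) =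
      (uq N a * uq N c - uq N c * uq N a) * uq N b := by
  by_cases hc : c < N
  · have h := pr_rel N (RKRel.knuth_rotation (N := N) ⟨a, by omega⟩ ⟨b, by omega⟩ ⟨c, hc⟩ hab hbc)
    have ha : a < N := by omega
    have hb : b < N := by omega
    simp only [map_sub, map_mul, map_zero] at h
    simp only [uq, ha, hb, hc, dif_pos]
    exact sub_eq_zero.mp h
  · simp [uq, hc]

lemma word_cons (N : ℕ) (a : Fin N) (l : List (Fin N)) :
    word N (a :: l) = FreeAlgebra.ι ℤ a * word N l := by simp [word]

lemma word_append (N : ℕ) (l l' : List (Fin N)) :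
    word N (l ++ l') = word N l * word N l' := by simp [word]

lemma mem_span_word (N : ℕ) (x : FreeAlgebra ℤ (Fin N)) :
    x ∈ Submodule.span ℤ (Set.range (word N)) := by
  have h : x ∈ Algebra.adjoin ℤ (Set.range (FreeAlgebra.ι ℤ : Fin N → _)) := by
    rw [FreeAlgebra.adjoin_range_ι]; trivial
  rw [← Subalgebra.mem_toSubmodule, Algebra.adjoin_eq_span] at h
  refine Submodule.span_mono ?_ h
  intro y hy
  induction hy using Submonoid.closure_induction with
  | mem y hy => obtain ⟨a, rfl⟩ := hy; exact ⟨[a], by simp [word]⟩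
  | one => exact ⟨[], by simp [word]⟩
  | mul y z _ _ hy hz =>
    obtain ⟨l, rfl⟩ := hy
    obtain ⟨l', rfl⟩ := hz
    exact ⟨l ++ l', word_append N l l'⟩

lemma uq_rep (N : ℕ) (i : ℕ) (w : RingQuot (RKRel N)) : uq N i * w * uq N i = 0 := by
  by_cases hi : i < N
  · obtain ⟨x, rfl⟩ : ∃ x, pr N x = w := RingQuot.mkAlgHom_surjective ℤ (RKRel N) w
    have hx := mem_span_word N x
    simp only [uq, hi, dif_pos]
    induction hx using Submodule.span_induction with
    | mem x hx =>
      obtain ⟨l, rfl⟩ := hx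
      have h := pr_rel N (RKRel.repeated (N := N) (⟨i, hi⟩ :: (l ++ [⟨i, hi⟩])) (by simp))
      rw [word_cons, word_append] at h
      simpa [word, mul_assoc] using h
    | zero => simp
    | add x y _ _ hx hy => rw [map_add, mul_add, add_mul, hx, hy, add_zero]
    | smul c x _ hx => rw [map_smul, mul_smul_comm, smul_mul_assoc, hx]; exact smul_zero c
  · simp [uq, hi]

lemma strictAnti_cons (N d : ℕ) (a : Fin N) (f : Fin d → Fin N) :
    StrictAnti (Fin.cons a f : Fin (d + 1) → Fin N) ↔ StrictAnti f ∧ ∀ i, f i < a := by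
  constructor
  · intro h
    refine ⟨fun i j hij => ?_, fun i => ?_⟩
    · simpa using h (Fin.succ_lt_succ_iff.mpr hij)
    · simpa using h (Fin.succ_pos i)
  · rintro ⟨h1, h2⟩ i j hij
    cases i using Fin.cases with
    | zero =>
      cases j using Fin.cases with
      | zero => simp at hij
      | succ j => simpa using h2 j
    | succ i =>
      cases j using Fin.cases with
      | zero => simp at hij
      | succ j => simpa using h1 (Fin.succ_lt_succ_iff.mp hij)

lemma monotone_cons (N d : ℕ) (a : Fin N) (f : Fin d → Fin N) :
    Monotone (Fin.cons a f : Fin (d + 1) → Fin N) ↔ Monotone f ∧ ∀ i, a ≤ f i := by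
  constructor
  · intro h
    refine ⟨fun i j hij => ?_, fun i => ?_⟩
    · simpa using h (Fin.succ_le_succ_iff.mpr hij)
    · simpa using h (Fin.zero_le i.succ)
  · rintro ⟨h1, h2⟩ i j hij
    cases i using Fin.cases with
    | zero =>
      cases j using Fin.cases with
      | zero => simp
      | succ j => simpa using h2 j
    | succ i =>
      cases j using Fin.cases with
      | zero => simp at hij
      | succ j => simpa using h1 (Fin.succ_le_succ_iff.mp hij)

lemma sum_cons (N d : ℕ) {M : Type*} [AddCommMonoid M] (g : (Fin (d + 1) → Fin N) → M) :
    ∑ f, g f = ∑ a : Fin N, ∑ f : Fin d → Fin N, g (Fin.cons a f) := by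
  rw [← Fintype.sum_prod_type']
  exact (Equiv.sum_comp (Fin.consEquiv (fun _ : Fin (d + 1) => Fin N)) g).symm

lemma pr_esym_aux (N d n : ℕ) (hn : n ≤ N) :
    pr N (∑ f : Fin d → Fin N,
      if StrictAnti f ∧ ∀ i, (f i : ℕ) < n then word N (List.ofFn f) else 0) =
      eRec (uq N) n d := by
  induction d generalizing n with
  | zero => simp [eRec_zero, word, StrictAnti]
  | succ d ih =>
    rw [sum_cons, eRec_eq_sum, map_sum]
    have h1 : ∀ a : Fin N, pr N (∑ f : Fin d → Fin N,
        if StrictAnti (Fin.cons a f : Fin (d + 1) → Fin N) ∧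
          ∀ i, ((Fin.cons a f : Fin (d + 1) → Fin N) i : ℕ) < n
        then word N (List.ofFn (Fin.cons a f : Fin (d + 1) → Fin N)) else 0) =
        if (a : ℕ) < n then uq N a * eRec (uq N) a d else 0 := by
      intro a
      split_ifs with han
      · rw [← ih a a.2.le, uq_fin, ← map_mul, Finset.mul_sum]
        congr 1
        apply Finset.sum_congr rfl
        intro f _
        rw [mul_ite, mul_zero, ← word_cons, List.ofFn_succ]
        simp only [Fin.cons_zero, Fin.cons_succ, strictAnti_cons, Fin.forall_fin_succ]
        refine if_congr ?_ rfl rfl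
        constructor
        · rintro ⟨⟨h, h'⟩, -⟩; exact ⟨h, h'⟩
        · rintro ⟨h, h'⟩; exact ⟨⟨h, h'⟩, han, fun i => (h' i).trans han⟩
      · rw [Finset.sum_eq_zero, map_zero]
        intro f _
        rw [if_neg]
        rintro ⟨-, h⟩
        exact han (by simpa using h 0)
    rw [Finset.sum_congr rfl (fun a _ => h1 a),
      Fin.sum_univ_eq_sum_range (fun a => if a < n then uq N a * eRec (uq N) a d else 0),
      ← Finset.sum_filter]
    congr 1
    ext a
    simp; omega

lemma pr_hsym_aux (N d n : ℕ) :
    pr N (∑ f : Fin d → Fin N,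
      if Monotone f ∧ ∀ i, n ≤ (f i : ℕ) then word N (List.ofFn f) else 0) =
      hRec (uq N) N d n := by
  induction d generalizing n with
  | zero => simp [hRec, word, Monotone]
  | succ d ih =>
    rw [sum_cons, hRec, map_sum]
    have h1 : ∀ a : Fin N, pr N (∑ f : Fin d → Fin N,
        if Monotone (Fin.cons a f : Fin (d + 1) → Fin N) ∧
          ∀ i, n ≤ ((Fin.cons a f : Fin (d + 1) → Fin N) i : ℕ)
        then word N (List.ofFn (Fin.cons a f : Fin (d + 1) → Fin N)) else 0) =
        if n ≤ (a : ℕ) then uq N a * hRec (uq N) N d a else 0 := by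
      intro a
      split_ifs with han
      · rw [← ih a, uq_fin, ← map_mul, Finset.mul_sum]
        congr 1
        apply Finset.sum_congr rfl
        intro f _
        rw [mul_ite, mul_zero, ← word_cons, List.ofFn_succ]
        simp only [Fin.cons_zero, Fin.cons_succ, monotone_cons, Fin.forall_fin_succ]
        refine if_congr ?_ rfl rfl
        constructor
        · rintro ⟨⟨h, h'⟩, -⟩; exact ⟨h, h'⟩
        · rintro ⟨h, h'⟩; exact ⟨⟨h, h'⟩, han, fun i => han.trans (h' i)⟩
      · rw [Finset.sum_eq_zero, map_zero]
        intro f _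
        rw [if_neg]
        rintro ⟨-, h⟩
        exact han (by simpa using h 0)
    rw [Finset.sum_congr rfl (fun a _ => h1 a),
      Fin.sum_univ_eq_sum_range (fun a => if n ≤ a then uq N a * hRec (uq N) N d a else 0),
      ← Finset.sum_filter]
    congr 1
    ext a
    simp; omega

lemma pr_esym (N d : ℕ) : pr N (esym N d) = eRec (uq N) N d := by
  rw [← pr_esym_aux N d N le_rfl]
  simp [esym]

lemma pr_hsym (N d : ℕ) : pr N (hsym N d) = hRec (uq N) N d 0 := by
  rw [← pr_hsym_aux N d 0]
  simp [hsym]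

lemma conv_pr (N d : ℕ) :
    ∑ p ∈ Finset.HasAntidiagonal.antidiagonal (d + 1), (-1) ^ p.1 * (pr N (esym N p.1) * pr N (hsym N p.2)) = 0 := by
  simp only [pr_esym, pr_hsym]
  rw [eh_rec (uq N) N N le_rfl (d + 1)]
  simp [hRec]

lemma hsym_mem_adjoin (N d : ℕ) : pr N (hsym N d) ∈
    Algebra.adjoin ℤ (Set.range fun k : ℕ => pr N (esym N k)) := by
  induction d using Nat.strong_induction_on with
  | _ d ih =>
  cases d with
  | zero => rw [pr_hsym]; exact one_mem _
  | succ d =>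
    have h := conv_pr N d
    rw [Finset.Nat.sum_antidiagonal_succ] at h
    simp only [pow_zero, one_mul] at h
    rw [pr_esym N 0, eRec_zero, one_mul] at h
    rw [eq_neg_of_add_eq_zero_left h]
    refine neg_mem (sum_mem fun p hp => mul_mem (pow_mem (neg_mem (one_mem _)) _) (mul_mem ?_ ?_))
    · exact Algebra.subset_adjoin ⟨_, rfl⟩
    · refine ih _ ?_
      have := Finset.HasAntidiagonal.mem_antidiagonal.mp hp
      omega

/-- In `U/I_RKst`, the noncommutative homogeneous symmetric functions `h_d(u)` lie in the
subalgebra generated by `e_1(u), e_2(u), …`, pairwise commute, and satisfy the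
Jacobi-Trudi identity `h_d(u) = det(e_{1+j-i}(u))_{1 ≤ i,j ≤ d}`, the determinant being
expanded with the products taken in row order (i.e. `h_d(u) = Ψ(h_d(x))` where
`Ψ : Λ(x) → U/I_RKst` sends `e_k(x) ↦ e_k(u)`). -/
theorem hsym_mem_commute_jacobiTrudi (N : ℕ) :
    (∀ d : ℕ, pr N (hsym N d) ∈
      Algebra.adjoin ℤ (Set.range fun k : ℕ => pr N (esym N k))) ∧
    (∀ d e : ℕ, pr N (hsym N d) * pr N (hsym N e) = pr N (hsym N e) * pr N (hsym N d)) ∧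
    (∀ d : ℕ, pr N (hsym N d) =
      pr N (∑ σ : Equiv.Perm (Fin d), ((Equiv.Perm.sign σ : ℤˣ) : ℤ) •
        (List.ofFn fun i : Fin d =>
          esymZ N (1 + ((σ i : ℕ) : ℤ) - ((i : ℕ) : ℤ))).prod)) := by
  have hcomm : ∀ a ∈ Set.range (fun k : ℕ => pr N (esym N k)),
      ∀ b ∈ Set.range (fun k : ℕ => pr N (esym N k)), a * b = b * a := by
    rintro _ ⟨k, rfl⟩ _ ⟨l, rfl⟩
    simp only [pr_esym]
    exact eRec_commute (uq N) (uq_knuth N) (uq_rep N) N k l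
  letI : CommRing (Algebra.adjoin ℤ (Set.range fun k : ℕ => pr N (esym N k))) :=
    Algebra.adjoinCommRingOfComm ℤ hcomm
  refine ⟨hsym_mem_adjoin N, fun d e => ?_, fun d => ?_⟩
  · exact congrArg Subtype.val (mul_comm
      (⟨_, hsym_mem_adjoin N d⟩ : Algebra.adjoin ℤ (Set.range fun k : ℕ => pr N (esym N k)))
      ⟨_, hsym_mem_adjoin N e⟩)
  · let S := Algebra.adjoin ℤ (Set.range fun k : ℕ => pr N (esym N k))
    let e : ℕ → S := fun k => ⟨pr N (esym N k), Algebra.subset_adjoin ⟨k, rfl⟩⟩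
    let h : ℕ → S := fun k => ⟨pr N (hsym N k), hsym_mem_adjoin N k⟩
    let φ : S →+* RingQuot (RKRel N) := S.val.toRingHom
    have hφ : Function.Injective φ := Subtype.val_injective
    have key := det_of_conv e h
      (hφ (by change pr N (esym N 0) = 1; rw [pr_esym, eRec_zero]))
      (hφ (by change pr N (hsym N 0) = 1; rw [pr_hsym]; rfl))
      (fun d => hφ (by
        rw [map_sum, map_zero, ← conv_pr N d]
        apply Finset.sum_congr rfl
        intro p _
        rw [map_mul, map_pow, map_neg, map_one, map_mul]
        rfl)) d
    have key2 := congrArg φ key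
    change pr N (hsym N d) = _ at key2
    rw [key2, ← Matrix.det_transpose, Matrix.det_apply, map_sum, map_sum]
    apply Finset.sum_congr rfl
    intro σ _
    rw [Units.smul_def, map_zsmul, map_zsmul, ← List.prod_ofFn, map_list_prod, map_list_prod,
      List.map_ofFn, List.map_ofFn]
    congr 3
    funext i
    simp only [Function.comp, Matrix.transpose_apply, Matrix.of_apply, esymZ]
    by_cases hi : (i : ℕ) ≤ (σ i : ℕ) + 1
    · rw [if_pos hi, if_pos (by omega)]
      change pr N (esym N _) = _
      congr 2
      omega
    · rw [if_neg hi, if_neg (by omega), map_zero, map_zero]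

end
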